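/- arXiv:1605.02469 — 2 statements merged into one kernel-verified Lean document; each statement's English description precedes it below -/
import Mathlib

section
/- Let G be a doubly regular tournament on v vertices containing a transitive subtournament of size s. Then 2·s·arccot(√v) ≤ π, i.e., s ≤ π/(2 arccot(√v)). -/
open Matrix Finset

/-- A digraph on `v` vertices, given by its adjacency matrix: entries in `{0,1}`, zero diagonal. -/
def IsDigraph {v : ℕ} (A : Matrix (Fin v) (Fin v) ℂ) : Prop :=
  (∀ x y, A x y = 0 ∨ A x y = 1) ∧ ∀ x, A x x = 0

/-- A tournament: a digraph with `A + Aᵀ = J - I`. -/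
def IsTournament {v : ℕ} (A : Matrix (Fin v) (Fin v) ℂ) : Prop :=
  IsDigraph A ∧ A + Aᵀ = Matrix.of (fun _ _ => 1) - 1

/-- A doubly regular tournament: every vertex dominates exactly `(v-1)/2` vertices and every
pair of distinct vertices jointly dominates exactly `(v-3)/4` vertices (so `v ≡ 3 (mod 4)`). -/
def IsDRT {v : ℕ} (A : Matrix (Fin v) (Fin v) ℂ) : Prop :=
  IsTournament A ∧ v % 4 = 3 ∧
  (∀ x, (univ.filter fun y => A x y = 1).card = (v - 1) / 2) ∧
  (∀ x y, x ≠ y → (univ.filter fun z => A x z = 1 ∧ A y z = 1).card = (v - 3) / 4)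

/-- `T` is a transitive subtournament of the digraph with adjacency matrix `A`. -/
def IsTransSubtournament {v : ℕ} (A : Matrix (Fin v) (Fin v) ℂ) (T : Finset (Fin v)) : Prop :=
  (∀ x ∈ T, ∀ y ∈ T, x ≠ y → Xor' (A x y = 1) (A y x = 1)) ∧
  (∀ x ∈ T, ∀ y ∈ T, ∀ z ∈ T, A x y = 1 → A y z = 1 → A x z = 1)

/-- The inverse cotangent, with values in `(0, π)`. -/
noncomputable def arccot (x : ℝ) : ℝ := Real.pi / 2 - Real.arctan x

/-!
The skew-adjacency matrix `S = A - Aᵀ` of a doubly regular tournament satisfies `S Sᵀ = v I - J`,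
and `P = v I - J` satisfies `P² = v P`, so the C⋆-identity gives `‖S‖² = ‖P‖ ≤ v` for the operator
norm. Ordering a transitive subtournament of size `s` along its arcs exhibits the corresponding
principal submatrix of `S` as the matrix with `1` above and `-1` below the diagonal. For
`ω = exp(iπ/s)` the vector `(1, ω, …, ω^(s-1))` is an eigenvector of it with eigenvalue
`(1 + ω) / (1 - ω) = i cot(π/(2s))`, because `ω^s = -1` lets the two geometric sums combine.
Passing to a principal submatrix does not increase the operator norm, so `cot(π/(2s)) ≤ √v`.
-/

section Arccot

lemma arccot_antitone : Antitone arccot :=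
  fun _ _ hxy => sub_le_sub_left (Real.arctan_mono hxy) _

lemma arccot_cot {θ : ℝ} (hθ₀ : 0 < θ) (hθπ : θ < Real.pi) : arccot (Real.cot θ) = θ := by
  rw [arccot, ← Real.tan_inv_eq_cot, ← Real.tan_pi_div_two_sub,
    Real.arctan_tan (by linarith) (by linarith), sub_sub_cancel]

end Arccot

section OperatorNorm

open scoped Matrix.Norms.L2Operator

variable {m n 𝕜 : Type*} [Fintype m] [DecidableEq m] [Fintype n] [DecidableEq n] [RCLike 𝕜]

lemma l2_opNorm_one_submatrix_le_one {e : m → n} (he : Function.Injective e) :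
    ‖(1 : Matrix n n 𝕜).submatrix id e‖ ≤ 1 := by
  have isometry_eq : ((1 : Matrix n n 𝕜).submatrix id e)ᴴ * (1 : Matrix n n 𝕜).submatrix id e
      = diagonal 1 := by
    rw [conjTranspose_submatrix, conjTranspose_one, ← submatrix_mul _ _ _ _ _ Function.bijective_id,
      mul_one, submatrix_one e he, diagonal_one']
  have norm_sq_le : ‖(1 : Matrix n n 𝕜).submatrix id e‖ ^ 2 ≤ 1 := by
    rw [sq, ← l2_opNorm_conjTranspose_mul_self, isometry_eq, l2_opNorm_diagonal]
    exact pi_norm_le_iff_of_nonneg zero_le_one |>.2 fun _ => norm_one.le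
  exact (sq_le_one_iff₀ (norm_nonneg _)).1 norm_sq_le

lemma l2_opNorm_submatrix_le (M : Matrix n n 𝕜) {e : m → n} (he : Function.Injective e) :
    ‖M.submatrix e e‖ ≤ ‖M‖ := by
  set E : Matrix n m 𝕜 := (1 : Matrix n n 𝕜).submatrix id e
  have hE : ‖E‖ ≤ 1 := l2_opNorm_one_submatrix_le_one he
  have compression_eq : M.submatrix e e = Eᴴ * (M * E) := by
    ext i j
    simp [E, Matrix.mul_apply, Matrix.one_apply]
  calc ‖M.submatrix e e‖ = ‖Eᴴ * (M * E)‖ := by rw [compression_eq]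
    _ ≤ ‖Eᴴ‖ * (‖M‖ * ‖E‖) :=
      (l2_opNorm_mul _ _).trans (by gcongr; exact l2_opNorm_mul _ _)
    _ ≤ 1 * (‖M‖ * 1) := by rw [l2_opNorm_conjTranspose]; gcongr
    _ = ‖M‖ := by ring

lemma norm_le_l2_opNorm_of_mulVec_eq_smul {M : Matrix n n 𝕜} {u : n → 𝕜} {μ : 𝕜} (hu : u ≠ 0)
    (hμ : M *ᵥ u = μ • u) : ‖μ‖ ≤ ‖M‖ := by
  have norm_pos : 0 < ‖WithLp.toLp 2 u‖ := norm_pos_iff.2 fun h => hu (congrArg WithLp.ofLp h)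
  refine le_of_mul_le_mul_right ?_ norm_pos
  calc ‖μ‖ * ‖WithLp.toLp 2 u‖ = ‖WithLp.toLp 2 (M *ᵥ u)‖ := by
        rw [hμ, WithLp.toLp_smul, norm_smul]
    _ ≤ ‖M‖ * ‖WithLp.toLp 2 u‖ := l2_opNorm_mulVec M (WithLp.toLp 2 u)

end OperatorNorm

section TransitiveTournament

/-- The adjacency matrix of the transitive tournament on `Fin s`, in which `i` dominates `j` exactly
when `i < j`. -/
def transitiveTournament (R : Type*) [Zero R] [One R] (s : ℕ) : Matrix (Fin s) (Fin s) R :=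
  of fun i j => if i < j then 1 else 0

/-- The vector of powers `(1, ω, …, ω ^ (s - 1))`, an eigenvector of the skew-adjacency matrix of
the transitive tournament when `ω ^ s = -1`. -/
def powers {R : Type*} [Monoid R] (s : ℕ) (ω : R) : Fin s → R := fun j => ω ^ (j : ℕ)

section CommRing

variable {R : Type*} [CommRing R] {s : ℕ} (ω : R) (i : Fin s)

lemma one_sub_mul_transitiveTournament_mulVec_powers :
    (1 - ω) * (transitiveTournament R s *ᵥ powers s ω) i = ω ^ (i + 1 : ℕ) - ω ^ s := by
  have sum_eq : (transitiveTournament R s *ᵥ powers s ω) i = ∑ j ∈ Ico (i + 1 : ℕ) s, ω ^ j := by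
    simp only [transitiveTournament, powers, mulVec, dotProduct, of_apply, Fin.lt_def, ite_mul,
      one_mul, zero_mul]
    rw [Fin.sum_univ_eq_sum_range (fun j => if (i : ℕ) < j then ω ^ j else 0), ← sum_filter]
    congr 1
    grind
  rw [sum_eq, mul_comm, geom_sum_Ico_mul_neg ω i.isLt]

lemma one_sub_mul_transitiveTournament_transpose_mulVec_powers :
    (1 - ω) * ((transitiveTournament R s)ᵀ *ᵥ powers s ω) i = 1 - ω ^ (i : ℕ) := by
  have sum_eq : ((transitiveTournament R s)ᵀ *ᵥ powers s ω) i = ∑ j ∈ range (i : ℕ), ω ^ j := by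
    simp only [transitiveTournament, powers, mulVec, dotProduct, transpose_apply, of_apply,
      Fin.lt_def, ite_mul, one_mul, zero_mul]
    rw [Fin.sum_univ_eq_sum_range (fun j => if j < (i : ℕ) then ω ^ j else 0), ← sum_filter]
    congr 1
    grind
  rw [sum_eq, mul_neg_geom_sum]

lemma one_sub_smul_transitiveTournament_sub_transpose_mulVec_powers {ω : R} (hω : ω ^ s = -1) :
    (1 - ω) • ((transitiveTournament R s - (transitiveTournament R s)ᵀ) *ᵥ powers s ω)
      = (1 + ω) • powers s ω := by
  ext i
  simp only [sub_mulVec, Pi.smul_apply, Pi.sub_apply, smul_eq_mul]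
  rw [mul_sub, one_sub_mul_transitiveTournament_mulVec_powers,
    one_sub_mul_transitiveTournament_transpose_mulVec_powers, hω, powers]
  ring

end CommRing

lemma transitiveTournament_sub_transpose_mulVec_powers_exp {s : ℕ} {θ : ℂ}
    (hθ : Complex.exp (2 * Complex.I * θ) ^ s = -1) :
    (transitiveTournament ℂ s - (transitiveTournament ℂ s)ᵀ) *ᵥ
        powers s (Complex.exp (2 * Complex.I * θ))
      = (Complex.I * Complex.cot θ) • powers s (Complex.exp (2 * Complex.I * θ)) := by
  have one_sub_ne : 1 - Complex.exp (2 * Complex.I * θ) ≠ 0 := by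
    intro h
    rw [← sub_eq_zero.1 h, one_pow] at hθ
    norm_num at hθ
  have eigenvalue_eq : (1 - Complex.exp (2 * Complex.I * θ)) * (Complex.I * Complex.cot θ)
      = 1 + Complex.exp (2 * Complex.I * θ) := by
    rw [Complex.cot_eq_exp_ratio]
    field_simp
    ring
  apply smul_right_injective _ one_sub_ne
  simp only [smul_smul, eigenvalue_eq,
    one_sub_smul_transitiveTournament_sub_transpose_mulVec_powers hθ]

open scoped Matrix.Norms.L2Operator in
lemma cot_pi_div_le_norm_transitiveTournament_sub_transpose {s : ℕ} (hs : s ≠ 0) :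
    Real.cot (Real.pi / (2 * s)) ≤ ‖transitiveTournament ℂ s - (transitiveTournament ℂ s)ᵀ‖ := by
  set θ : ℝ := Real.pi / (2 * s) with hθ
  have pow_eq : Complex.exp (2 * Complex.I * θ) ^ s = -1 := by
    rw [← Complex.exp_nat_mul, ← Complex.exp_pi_mul_I, hθ]
    congr 1
    push_cast
    field_simp
  have powers_ne : powers s (Complex.exp (2 * Complex.I * θ)) ≠ 0 :=
    fun h => pow_ne_zero _ (Complex.exp_ne_zero _) (congrFun h ⟨0, Nat.pos_of_ne_zero hs⟩)
  calc Real.cot θ ≤ ‖Complex.I * Complex.cot θ‖ := by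
        rw [norm_mul, Complex.norm_I, one_mul, ← Complex.ofReal_cot, Complex.norm_real]
        exact Real.le_norm_self _
    _ ≤ _ := norm_le_l2_opNorm_of_mulVec_eq_smul powers_ne
        (transitiveTournament_sub_transpose_mulVec_powers_exp pow_eq)

end TransitiveTournament

section Subtournament

lemma nonempty_fin_lt_relIso {α : Type*} [Fintype α] (r : α → α → Prop) [IsStrictTotalOrder α r]
    {s : ℕ} (hs : Fintype.card α = s) : Nonempty ((· < · : Fin s → Fin s → Prop) ≃r r) := by
  classical
  let _ : LinearOrder α := linearOrderOfSTO r
  exact ⟨(Fintype.orderIsoFinOfCardEq α hs).toRelIsoLT⟩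

variable {v s : ℕ} {A : Matrix (Fin v) (Fin v) ℂ} {T : Finset (Fin v)}

lemma IsTransSubtournament.isStrictTotalOrder (hA : IsDigraph A) (hT : IsTransSubtournament A T) :
    IsStrictTotalOrder T fun x y => A x y = 1 where
  trichotomous x y hxy hyx := by
    by_contra hne
    rcases hT.1 x x.2 y y.2 (Subtype.coe_ne_coe.2 hne) with h | h
    exacts [hxy h.1, hyx h.1]
  irrefl x := by simp [hA.2]
  trans x y z := hT.2 x x.2 y y.2 z z.2

lemma IsTransSubtournament.exists_submatrix_eq (hA : IsDigraph A) (hT : IsTransSubtournament A T)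
    (hTcard : T.card = s) :
    ∃ e : Fin s → Fin v, Function.Injective e ∧ A.submatrix e e = transitiveTournament ℂ s := by
  have := hT.isStrictTotalOrder hA
  obtain ⟨e⟩ := nonempty_fin_lt_relIso (fun x y : T => A x y = 1)
    ((Fintype.card_coe T).trans hTcard)
  have arc_iff (i j : Fin s) : A (e i) (e j) = 1 ↔ i < j := e.map_rel_iff
  refine ⟨fun i => e i, Subtype.val_injective.comp e.injective, ?_⟩
  ext i j
  rw [submatrix_apply, transitiveTournament, of_apply]
  split_ifs with hij
  · exact (arc_iff i j).2 hij
  · exact (hA.1 _ _).resolve_right (mt (arc_iff i j).1 hij)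

end Subtournament

section DoublyRegular

/-- The all-ones matrix `J`, in terms of which tournaments and double regularity are matrix
identities. -/
def allOnes (n : Type*) : Matrix n n ℂ := of fun _ _ => 1

lemma allOnes_transpose (n : Type*) : (allOnes n)ᵀ = allOnes n := rfl

lemma allOnes_isSelfAdjoint (n : Type*) : IsSelfAdjoint (allOnes n) := by
  ext
  simp [allOnes]

lemma allOnes_mul_allOnes (n : Type*) [Fintype n] :
    allOnes n * allOnes n = (Fintype.card n : ℂ) • allOnes n := by
  ext
  simp [allOnes, Matrix.mul_apply]

variable {v : ℕ} {A : Matrix (Fin v) (Fin v) ℂ}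

lemma IsDigraph.conjTranspose_sub_transpose (hA : IsDigraph A) : (A - Aᵀ)ᴴ = (A - Aᵀ)ᵀ := by
  have star_eq (x y : Fin v) : star (A x y) = A x y := by
    rcases hA.1 x y with h | h <;> simp [h]
  ext x y
  simp only [conjTranspose_apply, transpose_apply, Matrix.sub_apply, star_sub, star_eq]

lemma IsDigraph.sum_mul_eq_card (hA : IsDigraph A) (x y : Fin v) :
    ∑ z, A x z * A y z = #{z | A x z = 1 ∧ A y z = 1} := by
  rw [card_filter, Nat.cast_sum]
  refine sum_congr rfl fun z _ => ?_
  rcases hA.1 x z with hx | hx <;> rcases hA.1 y z with hy | hy <;> simp [hx, hy]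

lemma IsTournament.transpose_eq (hA : IsTournament A) : Aᵀ = allOnes (Fin v) - 1 - A :=
  eq_sub_of_add_eq' hA.2

lemma IsTournament.sub_transpose_eq (hA : IsTournament A) :
    A - Aᵀ = (2 : ℂ) • A - allOnes (Fin v) + 1 := by
  rw [hA.transpose_eq]
  module

lemma IsDRT.sum_row (hA : IsDRT A) (x : Fin v) : ∑ z, A x z = ((v : ℂ) - 1) / 2 := by
  obtain ⟨⟨hdigraph, -⟩, hv, hreg, -⟩ := hA
  have sum_eq_card : ∑ z, A x z = #{z | A x z = 1} := by
    rw [card_filter, Nat.cast_sum]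
    refine sum_congr rfl fun z _ => ?_
    rcases hdigraph.1 x z with h | h <;> simp [h]
  obtain ⟨k, rfl⟩ : ∃ k, v = 4 * k + 3 := ⟨v / 4, by omega⟩
  rw [sum_eq_card, hreg, show (4 * k + 3 - 1) / 2 = 2 * k + 1 by omega]
  push_cast
  ring

lemma IsDRT.mul_allOnes (hA : IsDRT A) :
    A * allOnes (Fin v) = (((v : ℂ) - 1) / 2) • allOnes (Fin v) := by
  ext x y
  simp [allOnes, Matrix.mul_apply, hA.sum_row]

lemma IsDRT.allOnes_mul_transpose (hA : IsDRT A) :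
    allOnes (Fin v) * Aᵀ = (((v : ℂ) - 1) / 2) • allOnes (Fin v) := by
  simpa only [transpose_mul, transpose_smul, allOnes_transpose]
    using congrArg transpose hA.mul_allOnes

lemma IsDRT.mul_transpose (hA : IsDRT A) :
    A * Aᵀ = (((v : ℂ) + 1) / 4) • (1 : Matrix (Fin v) (Fin v) ℂ)
      + (((v : ℂ) - 3) / 4) • allOnes (Fin v) := by
  obtain ⟨⟨hdigraph, -⟩, hv, hreg, hpair⟩ := hA
  obtain ⟨k, rfl⟩ : ∃ k, v = 4 * k + 3 := ⟨v / 4, by omega⟩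
  ext x y
  simp only [Matrix.mul_apply, transpose_apply, hdigraph.sum_mul_eq_card]
  obtain rfl | hxy := eq_or_ne x y
  · simp only [and_self]
    rw [hreg, show (4 * k + 3 - 1) / 2 = 2 * k + 1 by omega]
    simp only [allOnes, Matrix.add_apply, Matrix.smul_apply, one_apply_eq, of_apply, smul_eq_mul]
    push_cast
    ring
  · rw [hpair x y hxy, show (4 * k + 3 - 3) / 4 = k by omega]
    simp [allOnes, hxy]

lemma IsDRT.sub_transpose_mul_transpose (hA : IsDRT A) :
    (A - Aᵀ) * (A - Aᵀ)ᵀ = (v : ℂ) • (1 : Matrix (Fin v) (Fin v) ℂ) - allOnes (Fin v) := by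
  rw [hA.1.sub_transpose_eq]
  simp only [transpose_add, transpose_sub, transpose_smul, transpose_one, allOnes_transpose,
    add_mul, sub_mul, mul_add, mul_sub, smul_mul_assoc, mul_smul_comm, one_mul, mul_one,
    hA.mul_transpose, hA.mul_allOnes, hA.allOnes_mul_transpose, allOnes_mul_allOnes,
    Fintype.card_fin]
  rw [hA.1.transpose_eq]
  module

open scoped Matrix.Norms.L2Operator

lemma norm_card_smul_one_sub_allOnes_le (n : Type*) [Fintype n] [DecidableEq n] :
    ‖(Fintype.card n : ℂ) • (1 : Matrix n n ℂ) - allOnes n‖ ≤ Fintype.card n := by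
  set c : ℂ := (Fintype.card n : ℂ)
  set P : Matrix n n ℂ := c • 1 - allOnes n with hP
  have mul_self : P * P = c • P := by
    simp only [hP, mul_sub, sub_mul, smul_mul_assoc, mul_smul_comm, one_mul, mul_one,
      allOnes_mul_allOnes]
    module
  have selfAdjoint : IsSelfAdjoint P :=
    ((IsSelfAdjoint.natCast _).smul (.one _)).sub (allOnes_isSelfAdjoint n)
  have norm_sq : ‖P‖ * ‖P‖ = Fintype.card n * ‖P‖ := by
    rw [← sq, ← selfAdjoint.norm_mul_self, mul_self, norm_smul, Complex.norm_natCast]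
  rcases (norm_nonneg P).eq_or_lt with h | h
  · exact h ▸ Nat.cast_nonneg _
  · exact (mul_right_cancel₀ h.ne' norm_sq).le

lemma IsDRT.norm_sub_transpose_le_sqrt (hA : IsDRT A) : ‖A - Aᵀ‖ ≤ √v := by
  apply Real.le_sqrt_of_sq_le
  calc ‖A - Aᵀ‖ ^ 2 = ‖(A - Aᵀ) * (A - Aᵀ)ᴴ‖ := by
        rw [sq, ← CStarRing.norm_self_mul_star, star_eq_conjTranspose]
    _ = ‖(v : ℂ) • (1 : Matrix (Fin v) (Fin v) ℂ) - allOnes (Fin v)‖ := by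
        rw [hA.1.1.conjTranspose_sub_transpose, hA.sub_transpose_mul_transpose]
    _ ≤ v := by simpa using norm_card_smul_one_sub_allOnes_le (Fin v)

end DoublyRegular

open scoped Matrix.Norms.L2Operator in
theorem interlacing_bound_doubly_regular_tournament_general
    {v s : ℕ} {A : Matrix (Fin v) (Fin v) ℂ} (hA : IsDigraph A) {c : ℝ} (hc : ‖A - Aᵀ‖ ≤ c)
    {T : Finset (Fin v)} (hT : IsTransSubtournament A T) (hTcard : T.card = s) :
    2 * (s : ℝ) * arccot c ≤ Real.pi := by
  obtain rfl | hs := eq_or_ne s 0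
  · simp [Real.pi_nonneg]
  obtain ⟨e, he, submatrix_eq⟩ := hT.exists_submatrix_eq hA hTcard
  have cot_le : Real.cot (Real.pi / (2 * s)) ≤ c :=
    calc Real.cot (Real.pi / (2 * s))
        ≤ ‖transitiveTournament ℂ s - (transitiveTournament ℂ s)ᵀ‖ :=
          cot_pi_div_le_norm_transitiveTournament_sub_transpose hs
      _ = ‖(A - Aᵀ).submatrix e e‖ := by
          rw [submatrix_sub, Pi.sub_apply, Pi.sub_apply, ← transpose_submatrix, submatrix_eq]
      _ ≤ ‖A - Aᵀ‖ := l2_opNorm_submatrix_le _ he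
      _ ≤ c := hc
  have one_le_s : (1 : ℝ) ≤ s := by exact_mod_cast Nat.one_le_iff_ne_zero.2 hs
  have angle_lt_pi : Real.pi / (2 * s) < Real.pi := div_lt_self Real.pi_pos (by linarith)
  calc 2 * (s : ℝ) * arccot c ≤ 2 * s * arccot (Real.cot (Real.pi / (2 * s))) := by
        gcongr
        exact arccot_antitone cot_le
    _ = 2 * s * (Real.pi / (2 * s)) := by rw [arccot_cot (by positivity) angle_lt_pi]
    _ = Real.pi := by field_simp

/-- If a doubly regular tournament on `v` vertices contains a transitive subtournament of
size `s`, then `2 s arccot(√v) ≤ π`. -/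
theorem interlacing_bound_doubly_regular_tournament
    {v s : ℕ} (A : Matrix (Fin v) (Fin v) ℂ) (hA : IsDRT A)
    (T : Finset (Fin v)) (hT : IsTransSubtournament A T) (hTcard : T.card = s) :
    2 * (s : ℝ) * arccot (Real.sqrt v) ≤ Real.pi :=
  interlacing_bound_doubly_regular_tournament_general hA.1.1 hA.norm_sub_transpose_le_sqrt hT hTcard
end

section
/- Let G be a regular digraph on v vertices containing a transitive subtournament of size s, and let θ_max be the maximum eigenvalue of the Seidel matrix S_G. Then s ≤ (−3θ_max² + √(9θ_max⁴ + 4v² + 12θ_max²v²))/(2v). -/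
open Matrix Finset

/-- A regular digraph: `A 𝟙 = Aᵀ 𝟙 = k 𝟙` for some `k`. -/
def IsRegularDigraph {v : ℕ} (A : Matrix (Fin v) (Fin v) ℂ) : Prop :=
  IsDigraph A ∧ ∃ k : ℕ,
    (A *ᵥ fun _ => 1) = (fun _ => (k : ℂ)) ∧ (Aᵀ *ᵥ fun _ => 1) = (fun _ => (k : ℂ))

/-- The Seidel matrix `S = i (A - Aᵀ)` of a digraph with adjacency matrix `A`. -/
def Seidel {v : ℕ} (A : Matrix (Fin v) (Fin v) ℂ) : Matrix (Fin v) (Fin v) ℂ :=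
  Complex.I • (A - Aᵀ)

/-!
The Seidel matrix `S` satisfies `Sᵀ = -S`, so its spectrum is symmetric about `0` and its operator
norm is at most `θmax`. Apply this to `𝟙_T - (s / v) 𝟙`, of squared norm `s - s² / v`: since in- and
out-degrees agree, `S 𝟙 = 0` and the image is `S 𝟙_T`. The out-degrees inside a transitive
tournament are exactly `0, …, s - 1`, so the entries of `S 𝟙_T` on `T` are `i (2j - (s - 1))` for
`j < s`, with squared norms summing to `s (s² - 1) / 3`. Hence `v (s² - 1) ≤ 3 θmax² (v - s)`, a
quadratic inequality in `s` whose larger root is the bound.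
-/

section Spectrum

variable {n : Type*} [Fintype n] [DecidableEq n]

lemma spectrum_transpose {R S : Type*} [CommSemiring R] [CommRing S] [Algebra R S]
    (M : Matrix n n S) : spectrum R Mᵀ = spectrum R M := by
  ext μ
  have htranspose : algebraMap R (Matrix n n S) μ - Mᵀ = (algebraMap R (Matrix n n S) μ - M)ᵀ := by
    rw [transpose_sub, algebraMap_eq_diagonal, diagonal_transpose]
  rw [spectrum.mem_iff, spectrum.mem_iff, htranspose, isUnit_transpose]

lemma neg_mem_spectrum_of_transpose_eq_neg {R S : Type*} [CommRing R] [CommRing S] [Algebra R S]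
    {M : Matrix n n S} (hM : Mᵀ = -M) {μ : R} (hμ : μ ∈ spectrum R M) : -μ ∈ spectrum R M := by
  rwa [← spectrum_transpose, hM, ← spectrum.neg_eq, Set.neg_mem_neg]

open scoped Matrix.Norms.L2Operator in
lemma norm_mulVec_le_of_abs_spectrum_le {M : Matrix n n ℂ} (hM : M.IsHermitian) {c : ℝ}
    (hc : 0 ≤ c) (hspec : ∀ μ ∈ spectrum ℝ M, |μ| ≤ c) (w : n → ℂ) :
    ‖WithLp.toLp 2 (M *ᵥ w)‖ ≤ c * ‖WithLp.toLp 2 w‖ := by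
  have hnorm : ‖M‖ ≤ c := by
    rw [← cfc_id ℝ M hM.isSelfAdjoint]
    exact norm_cfc_le hc hspec
  exact (l2_opNorm_mulVec M (WithLp.toLp 2 w)).trans (by gcongr)

lemma norm_mulVec_le_of_transpose_eq_neg {M : Matrix n n ℂ} (hM : M.IsHermitian) (hskew : Mᵀ = -M)
    {θ : ℝ} (hθ : θ ∈ upperBounds (spectrum ℝ M)) (w : n → ℂ) :
    ‖WithLp.toLp 2 (M *ᵥ w)‖ ≤ |θ| * ‖WithLp.toLp 2 w‖ := by
  refine norm_mulVec_le_of_abs_spectrum_le hM (abs_nonneg θ) (fun μ hμ => ?_) w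
  have hneg : -μ ≤ θ := hθ (neg_mem_spectrum_of_transpose_eq_neg hskew hμ)
  exact (abs_le'.2 ⟨hθ hμ, hneg⟩).trans (le_abs_self θ)

end Spectrum

section IndicatorVector

variable {n : Type*} [Fintype n] (T : Finset n)

lemma mulVec_indicator_one {m R : Type*} [NonAssocSemiring R] (M : Matrix m n R) (x : m) :
    (M *ᵥ (T : Set n).indicator 1) x = ∑ y ∈ T, M x y := by
  classical
  simp [mulVec, dotProduct, Set.indicator_apply]

/-- The orthogonal projection of the indicator vector of `T` onto the complement of the all-one
vector, as a plain function; Euclidean norms are taken through `WithLp.toLp 2`. -/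
noncomputable def centeredIndicator (T : Finset n) : n → ℂ :=
  (T : Set n).indicator 1 - ((#T : ℂ) / Fintype.card n) • 1

lemma norm_sq_centeredIndicator_apply [DecidableEq n] (x : n) :
    ‖centeredIndicator T x‖ ^ 2 =
      (1 - 2 * (#T / Fintype.card n : ℝ)) * (if x ∈ T then 1 else 0) +
        (#T / Fintype.card n : ℝ) ^ 2 := by
  have hreal : centeredIndicator T x =
      (((if x ∈ T then 1 else 0) - #T / Fintype.card n : ℝ) : ℂ) := by
    by_cases hx : x ∈ T <;> simp [centeredIndicator, hx]
  rw [hreal, Complex.norm_real, Real.norm_eq_abs, sq_abs]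
  split_ifs <;> ring

lemma norm_sq_centeredIndicator :
    ‖WithLp.toLp 2 (centeredIndicator T)‖ ^ 2 = (#T : ℝ) - (#T : ℝ) ^ 2 / Fintype.card n := by
  classical
  simp only [EuclideanSpace.norm_sq_eq, norm_sq_centeredIndicator_apply, sum_add_distrib, ← mul_sum,
    sum_ite_mem, univ_inter, sum_const, card_univ, nsmul_eq_mul, mul_one]
  rcases eq_or_ne (Fintype.card n : ℝ) 0 with hn | hn
  · simp [hn]
  · field_simp
    ring

lemma mulVec_centeredIndicator {m : Type*} {M : Matrix m n ℂ} (hone : M *ᵥ 1 = 0) (x : m) :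
    (M *ᵥ centeredIndicator T) x = ∑ y ∈ T, M x y := by
  rw [centeredIndicator, mulVec_sub, mulVec_smul, hone, smul_zero, sub_zero, mulVec_indicator_one]

lemma sum_norm_sq_sum_le_of_mulVec_one_eq_zero [DecidableEq n] {M : Matrix n n ℂ}
    (hM : M.IsHermitian) (hskew : Mᵀ = -M) (hone : M *ᵥ 1 = 0)
    {θ : ℝ} (hθ : θ ∈ upperBounds (spectrum ℝ M)) :
    ∑ x ∈ T, ‖∑ y ∈ T, M x y‖ ^ 2 ≤ θ ^ 2 * (#T - (#T : ℝ) ^ 2 / Fintype.card n) :=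
  calc ∑ x ∈ T, ‖∑ y ∈ T, M x y‖ ^ 2
      ≤ ∑ x, ‖∑ y ∈ T, M x y‖ ^ 2 := sum_le_univ_sum_of_nonneg fun x => by positivity
    _ = ‖WithLp.toLp 2 (M *ᵥ centeredIndicator T)‖ ^ 2 := by
      simp only [EuclideanSpace.norm_sq_eq, mulVec_centeredIndicator T hone]
    _ ≤ (|θ| * ‖WithLp.toLp 2 (centeredIndicator T)‖) ^ 2 := by
      gcongr
      exact norm_mulVec_le_of_transpose_eq_neg hM hskew hθ _
    _ = θ ^ 2 * (#T - (#T : ℝ) ^ 2 / Fintype.card n) := by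
      rw [mul_pow, sq_abs, norm_sq_centeredIndicator]

end IndicatorVector

section Score

variable {α : Type*} {r : α → α → Prop} [DecidableRel r] {T : Finset α}

/-- The score of `x` in `T`: the number of elements of `T` that `x` beats, where `r x y` is read as
`x` beats `y`. -/
def score (r : α → α → Prop) [DecidableRel r] (T : Finset α) (x : α) : ℕ :=
  #{y ∈ T | r x y}

lemma score_lt_card (hirrefl : ∀ x ∈ T, ¬r x x) {x : α} (hx : x ∈ T) : score r T x < #T :=
  card_lt_card (filter_ssubset.2 ⟨x, hx, hirrefl x hx⟩)

lemma score_lt_score (hirrefl : ∀ x ∈ T, ¬r x x)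
    (htrans : ∀ x ∈ T, ∀ y ∈ T, ∀ z ∈ T, r x y → r y z → r x z)
    {x y : α} (hx : x ∈ T) (hy : y ∈ T) (hxy : r x y) : score r T y < score r T x := by
  refine card_lt_card ((ssubset_iff_of_subset fun z hz => ?_).2 ⟨y, ?_, ?_⟩)
  · obtain ⟨hzT, hyz⟩ := mem_filter.1 hz
    exact mem_filter.2 ⟨hzT, htrans x hx y hy z hzT hxy hyz⟩
  · exact mem_filter.2 ⟨hy, hxy⟩
  · exact fun hyy => hirrefl y hy (mem_filter.1 hyy).2

/-- The relation `r` restricts to a strict total order on `T`, as the arc relation of a digraph does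
on a transitive subtournament. -/
structure IsStrictTotalOrderOn (r : α → α → Prop) (T : Finset α) : Prop where
  irrefl : ∀ x ∈ T, ¬r x x
  trans : ∀ x ∈ T, ∀ y ∈ T, ∀ z ∈ T, r x y → r y z → r x z
  total : ∀ x ∈ T, ∀ y ∈ T, x ≠ y → r x y ∨ r y x

namespace IsStrictTotalOrderOn

lemma injOn_score (h : IsStrictTotalOrderOn r T) : Set.InjOn (score r T) T := by
  intro x hx y hy hscore
  by_contra hne
  rcases h.total x hx y hy hne with hxy | hyx
  · exact (score_lt_score h.irrefl h.trans hx hy hxy).ne' hscore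
  · exact (score_lt_score h.irrefl h.trans hy hx hyx).ne hscore

lemma image_score (h : IsStrictTotalOrderOn r T) : T.image (score r T) = range #T := by
  refine eq_of_subset_of_card_le (image_subset_iff.2 fun x hx => ?_) ?_
  · exact mem_range.2 (score_lt_card h.irrefl hx)
  · rw [card_image_of_injOn h.injOn_score, card_range]

lemma sum_comp_score {M : Type*} [AddCommMonoid M] (h : IsStrictTotalOrderOn r T) (g : ℕ → M) :
    ∑ x ∈ T, g (score r T x) = ∑ j ∈ range #T, g j := by
  rw [← h.image_score, sum_image h.injOn_score]

end IsStrictTotalOrderOn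

end Score

lemma three_mul_sum_range_two_mul_sub_sq {R : Type*} [CommRing R] (n : ℕ) :
    3 * ∑ j ∈ range n, (2 * (j : R) - (n - 1)) ^ 2 = n * ((n : R) ^ 2 - 1) := by
  have hshift (c : R) (m : ℕ) : 3 * ∑ j ∈ range m, (2 * (j : R) - c) ^ 2 =
      2 * m * (m - 1) * (2 * m - 1) - 6 * c * (m * (m - 1)) + 3 * m * c ^ 2 := by
    induction m with
    | zero => simp
    | succ m ih =>
      rw [sum_range_succ, mul_add, ih]
      push_cast
      ring
  rw [hshift]
  ring

lemma le_of_quadratic_nonpos {a b c x : ℝ} (ha : 0 < a) (hx : a * x ^ 2 + b * x + c ≤ 0) :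
    x ≤ (-b + √(discrim a b c)) / (2 * a) := by
  have hsq : (2 * a * x + b) ^ 2 ≤ discrim a b c := by
    rw [discrim]
    nlinarith [mul_nonneg ha.le (neg_nonneg.2 hx)]
  have hroot : 2 * a * x + b ≤ √(discrim a b c) := Real.le_sqrt_of_sq_le hsq
  rw [le_div_iff₀ (by positivity)]
  linarith

section Digraph

variable {v : ℕ} {A : Matrix (Fin v) (Fin v) ℂ} {T : Finset (Fin v)}

lemma seidel_transpose (A : Matrix (Fin v) (Fin v) ℂ) : (Seidel A)ᵀ = -Seidel A := by
  rw [Seidel, transpose_smul, transpose_sub, transpose_transpose, ← smul_neg, neg_sub]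

lemma seidel_isHermitian (hA : IsDigraph A) : (Seidel A).IsHermitian := by
  have hreal : Aᴴ = Aᵀ := by
    ext x y
    rcases hA.1 y x with h | h <;> simp [h]
  have hreal_transpose : Aᵀᴴ = A := by rw [← hreal, conjTranspose_conjTranspose]
  rw [IsHermitian, Seidel, conjTranspose_smul, conjTranspose_sub, hreal, hreal_transpose,
    Complex.star_def, Complex.conj_I, neg_smul, ← smul_neg, neg_sub]

lemma seidel_mulVec_one (hbalanced : A *ᵥ 1 = Aᵀ *ᵥ 1) : Seidel A *ᵥ 1 = 0 := by
  rw [Seidel, smul_mulVec, sub_mulVec, hbalanced, sub_self, smul_zero]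

open scoped Classical in
lemma sum_adj_eq_score (hA : IsDigraph A) (T : Finset (Fin v)) (x : Fin v) :
    ∑ y ∈ T, A x y = score (fun x y => A x y = 1) T x := by
  rw [score, card_filter, Nat.cast_sum]
  refine sum_congr rfl fun y _ => ?_
  rcases hA.1 x y with h | h <;> simp [h]

lemma IsTransSubtournament.isStrictTotalOrderOn (hT : IsTransSubtournament A T)
    (hA : IsDigraph A) : IsStrictTotalOrderOn (fun x y => A x y = 1) T where
  irrefl x _ := by simp [hA.2 x]
  trans := hT.2
  total x hx y hy hxy := Xor.or (hT.1 x hx y hy hxy)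

lemma adj_add_adj_eq_one (hA : IsDigraph A) (hT : IsTransSubtournament A T) {x y : Fin v}
    (hx : x ∈ T) (hy : y ∈ T) (hxy : x ≠ y) : A x y + A y x = 1 := by
  rcases hT.1 x hx y hy hxy with ⟨harc, hno⟩ | ⟨harc, hno⟩
  · rw [harc, (hA.1 y x).resolve_right hno, add_zero]
  · rw [harc, (hA.1 x y).resolve_right hno, zero_add]

lemma sum_adj_add_adj_eq_card_sub_one (hA : IsDigraph A) (hT : IsTransSubtournament A T)
    {x : Fin v} (hx : x ∈ T) : ∑ y ∈ T, (A x y + A y x) = #T - 1 := by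
  rw [← add_sum_erase T _ hx, hA.2 x, sum_congr rfl fun y hy =>
    adj_add_adj_eq_one hA hT hx (mem_of_mem_erase hy) (ne_of_mem_erase hy).symm]
  simp [card_erase_of_mem hx, Nat.cast_sub (card_pos.2 ⟨x, hx⟩)]

open scoped Classical in
lemma sum_seidel_eq_score (hA : IsDigraph A) (hT : IsTransSubtournament A T)
    {x : Fin v} (hx : x ∈ T) :
    ∑ y ∈ T, Seidel A x y =
      Complex.I * (2 * (score (fun x y => A x y = 1) T x : ℝ) - (#T - 1) : ℝ) := by
  have hdeg := sum_adj_add_adj_eq_card_sub_one hA hT hx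
  simp only [Seidel, Matrix.smul_apply, Matrix.sub_apply, transpose_apply, smul_eq_mul, ← mul_sum]
  push_cast
  rw [sum_add_distrib] at hdeg
  rw [sum_sub_distrib, ← hdeg, ← sum_adj_eq_score hA]
  ring

lemma three_mul_sum_norm_sq_sum_seidel (hA : IsDigraph A) (hT : IsTransSubtournament A T) :
    3 * ∑ x ∈ T, ‖∑ y ∈ T, Seidel A x y‖ ^ 2 = #T * ((#T : ℝ) ^ 2 - 1) := by
  classical
  have hrow (x) (hx : x ∈ T) : ‖∑ y ∈ T, Seidel A x y‖ ^ 2 =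
      (2 * (score (fun x y => A x y = 1) T x : ℝ) - (#T - 1)) ^ 2 := by
    rw [sum_seidel_eq_score hA hT hx, norm_mul, Complex.norm_I, one_mul, Complex.norm_real,
      Real.norm_eq_abs, sq_abs]
  rw [sum_congr rfl hrow, ← three_mul_sum_range_two_mul_sub_sq,
    (hT.isStrictTotalOrderOn hA).sum_comp_score fun j => (2 * (j : ℝ) - (#T - 1)) ^ 2]

lemma card_transSubtournament_quadratic_le (hA : IsDigraph A) (hbalanced : A *ᵥ 1 = Aᵀ *ᵥ 1)
    (hT : IsTransSubtournament A T) {θ : ℝ} (hθ : θ ∈ upperBounds (spectrum ℝ (Seidel A))) :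
    v * ((#T : ℝ) ^ 2 - 1) ≤ 3 * θ ^ 2 * (v - #T) := by
  have hbound := sum_norm_sq_sum_le_of_mulVec_one_eq_zero T (seidel_isHermitian hA)
    (seidel_transpose A) (seidel_mulVec_one hbalanced) hθ
  have hscores := three_mul_sum_norm_sq_sum_seidel hA hT
  rw [Fintype.card_fin] at hbound
  rcases T.eq_empty_or_nonempty with rfl | hne
  · simp only [card_empty, Nat.cast_zero]
    nlinarith [mul_nonneg (sq_nonneg θ) v.cast_nonneg (α := ℝ)]
  · have hs : (0 : ℝ) < #T := by exact_mod_cast hne.card_pos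
    have hv : (0 : ℝ) < v := by exact_mod_cast hne.choose.pos
    have hcleared : (#T : ℝ) * (v * ((#T : ℝ) ^ 2 - 1)) ≤ #T * (3 * θ ^ 2 * (v - #T)) :=
      calc (#T : ℝ) * (v * ((#T : ℝ) ^ 2 - 1))
          = v * (3 * ∑ x ∈ T, ‖∑ y ∈ T, Seidel A x y‖ ^ 2) := by rw [hscores]; ring
        _ ≤ v * (3 * (θ ^ 2 * (#T - (#T : ℝ) ^ 2 / v))) := by gcongr
        _ = #T * (3 * θ ^ 2 * (v - #T)) := by field_simp
    exact le_of_mul_le_mul_left hcleared hs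

end Digraph

theorem hoffman_type_bound_regular_digraph_general {v : ℕ} {A : Matrix (Fin v) (Fin v) ℂ}
    (hA : IsDigraph A) (hbalanced : A *ᵥ 1 = Aᵀ *ᵥ 1) {T : Finset (Fin v)}
    (hT : IsTransSubtournament A T) {θmax : ℝ}
    (hθ : IsGreatest (spectrum ℝ (Seidel A)) θmax) :
    (#T : ℝ) ≤ (-3 * θmax ^ 2 +
      √(9 * θmax ^ 4 + 4 * (v : ℝ) ^ 2 + 12 * θmax ^ 2 * (v : ℝ) ^ 2)) / (2 * (v : ℝ)) := by
  have hv : 0 < v := by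
    rw [(seidel_isHermitian hA).spectrum_real_eq_range_eigenvalues] at hθ
    obtain ⟨i, -⟩ := hθ.1
    exact i.pos
  have hquadratic : (v : ℝ) * (#T : ℝ) ^ 2 + 3 * θmax ^ 2 * #T + -(v * (1 + 3 * θmax ^ 2)) ≤ 0 := by
    linarith [card_transSubtournament_quadratic_le hA hbalanced hT hθ.2]
  convert le_of_quadratic_nonpos (Nat.cast_pos.2 hv) hquadratic using 3
  · ring
  · rw [discrim]
    ring_nf

/-- Hoffman-type bound for regular digraphs: if a regular digraph on `v` vertices contains a
transitive subtournament of size `s` and `θmax` is the maximum eigenvalue of its Seidel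
matrix, then `s ≤ (−3 θmax² + √(9 θmax⁴ + 4v² + 12 θmax² v²))/(2v)`. -/
theorem hoffman_type_bound_regular_digraph
    {v s : ℕ} (A : Matrix (Fin v) (Fin v) ℂ) (hA : IsRegularDigraph A)
    (hH : (Seidel A).IsHermitian)
    (T : Finset (Fin v)) (hT : IsTransSubtournament A T) (hTcard : T.card = s)
    (θmax : ℝ)
    (hθ₁ : θmax ∈ Finset.univ.image hH.eigenvalues)
    (hθ₂ : ∀ i, hH.eigenvalues i ≤ θmax) :
    (s : ℝ) ≤ (-3 * θmax ^ 2 +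
      Real.sqrt (9 * θmax ^ 4 + 4 * (v : ℝ) ^ 2 + 12 * θmax ^ 2 * (v : ℝ) ^ 2)) /
        (2 * (v : ℝ)) := by
  obtain ⟨hdigraph, k, hout, hin⟩ := hA
  have hθ : IsGreatest (spectrum ℝ (Seidel A)) θmax := by
    rw [hH.spectrum_real_eq_range_eigenvalues]
    exact ⟨by simpa using hθ₁, Set.forall_mem_range.2 hθ₂⟩
  exact hTcard ▸ hoffman_type_bound_regular_digraph_general hdigraph (hout.trans hin.symm) hT hθ
end
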